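/- Let W = (L, f) be a weighted lattice with L modular and complemented, and let H be a coatom of L. Then: (1) P(W; z) = z^{f(⊤) − f(H)}·P(W|_H; z) − ∑_{y atom of L, y ≰ H} P(W/y; z) as polynomials in ℤ[z]; and (2) if H is not a flat of W, then P(W; z) = P(W|_H; z) − ∑_{y atom of L, y ≰ H} P(W/y; z). -/

import Mathlib

/-- The characteristic polynomial of the minor `W([X,Y])` of the weighted lattice `W = (L, f)`:
`P(W([X,Y]); z) = ∑_{A ∈ L, X ≤ A ≤ Y} μ(X,A) · z^(f(Y) - f(A))`. -/
noncomputable def charPoly {L : Type*} [Lattice L] (μ : L → L → ℤ) (f : L → ℕ) (X Y : L) :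
    Polynomial ℤ :=
  ∑ᶠ A ∈ Set.Icc X Y, μ X A • ((Polynomial.X : Polynomial ℤ) ^ (f Y - f A))

/-!
For `H ≤ Y`, the polynomials `P(W([y, Y]))` over all `y ∈ [X, Y]` with `y ⊓ H = X` add up to
`z ^ (f Y - f H) * P(W([X, H]))`: by a form of Weisner's theorem, the total coefficient
`∑ μ(y, A)` of `z ^ (f Y - f A)` is `μ(X, A)` when `A ≤ H` and `0` otherwise. For `X = ⊥`, `Y = ⊤`
and `H` a coatom, lower modularity forces every such `y` to be `⊥` or an atom not below `H`, and
the summand at `y = ⊥` is `P(W)`.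
-/

open Finset IncidenceAlgebra

theorem eq_mu_of_recursion {α R : Type*} [PartialOrder α] [LocallyFiniteOrder α] [DecidableEq α]
    [AddCommGroup R] [One R] {μ : α → α → R} (hμ_refl : ∀ x, μ x x = 1)
    (hμ_rec : ∀ x y, x < y → μ x y = -∑ᶠ z ∈ Set.Ico x y, μ x z) {x y : α} (hxy : x ≤ y) :
    μ x y = mu R x y := by
  obtain rfl | hlt := hxy.eq_or_lt
  · rw [hμ_refl, mu_self]
  · rw [hμ_rec x y hlt, mu_eq_neg_sum_Ico_of_ne hlt.ne, ← coe_Ico, finsum_mem_coe_finset]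
    refine congrArg Neg.neg (sum_congr rfl fun z hz => ?_)
    exact eq_mu_of_recursion hμ_refl hμ_rec (mem_Ico.1 hz).1
termination_by #(Icc x y)
decreasing_by exact card_lt_card (Icc_ssubset_Icc_right hxy le_rfl (mem_Ico.1 hz).2)

-- Expand the condition `y ⊓ H = X` as `∑ v ∈ Icc X (y ⊓ H), mu R X v` and sum over `y` first.
theorem sum_filter_inf_eq_mu {α R : Type*} [SemilatticeInf α] [LocallyFiniteOrder α] [DecidableEq α]
    [DecidableLE α] [Ring R] (X H A : α) :
    ∑ y ∈ Icc X A with y ⊓ H = X, mu R y A = if A ≤ H then mu R X A else 0 := by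
  calc ∑ y ∈ Icc X A with y ⊓ H = X, mu R y A
      = ∑ y ∈ Icc X A, (if X = y ⊓ H then 1 else 0) * mu R y A := by
        simp only [sum_filter, ite_mul, one_mul, zero_mul, eq_comm]
    _ = ∑ y ∈ Icc X A, ∑ v ∈ Icc X (y ⊓ H), mu R X v * mu R y A := by
        simp only [← sum_Icc_mu_right, sum_mul]
    _ = ∑ v ∈ Icc X (A ⊓ H), ∑ y ∈ Icc v A, mu R X v * mu R y A := by
        refine sum_comm' fun y v => ?_
        simp only [mem_Icc, le_inf_iff]
        constructor
        · rintro ⟨⟨-, hyA⟩, hXv, hvy, hvH⟩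
          exact ⟨⟨hvy, hyA⟩, hXv, hvy.trans hyA, hvH⟩
        · rintro ⟨⟨hvy, hyA⟩, hXv, -, hvH⟩
          exact ⟨⟨hXv.trans hvy, hyA⟩, hXv, hvy, hvH⟩
    _ = ∑ v ∈ Icc X (A ⊓ H), if v = A then mu R X v else 0 := by
        simp only [← mul_sum, sum_Icc_mu_left, mul_ite, mul_one, mul_zero]
    _ = if A ≤ H then mu R X A else 0 := by
        by_cases hXA : X ≤ A
        · simp [hXA]
        · simp [hXA, apply_eq_zero_of_not_le hXA]

section CharPoly

variable {L : Type*} [Lattice L] [LocallyFiniteOrder L]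

theorem charPoly_eq_sum_Icc (μ : L → L → ℤ) (f : L → ℕ) (X Y : L) :
    charPoly μ f X Y = ∑ A ∈ Icc X Y, μ X A • (Polynomial.X : Polynomial ℤ) ^ (f Y - f A) := by
  rw [charPoly, ← coe_Icc, finsum_mem_coe_finset]

variable [DecidableEq L]

theorem charPoly_eq_charPoly_mu {μ : L → L → ℤ} (hμ_refl : ∀ x, μ x x = 1)
    (hμ_rec : ∀ x y, x < y → μ x y = -∑ᶠ z ∈ Set.Ico x y, μ x z) (f : L → ℕ) (X Y : L) :
    charPoly μ f X Y = charPoly (mu ℤ) f X Y :=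
  finsum_mem_congr rfl fun A hA => by rw [eq_mu_of_recursion hμ_refl hμ_rec hA.1]

theorem sum_filter_inf_eq_charPoly_mu {f : L → ℕ} (hf : Monotone f) (X : L) {H Y : L}
    (hHY : H ≤ Y) :
    ∑ y ∈ Icc X Y with y ⊓ H = X, charPoly (mu ℤ) f y Y =
      (Polynomial.X : Polynomial ℤ) ^ (f Y - f H) * charPoly (mu ℤ) f X H := by
  classical
  let z : Polynomial ℤ := Polynomial.X
  have hpow : ∀ A ∈ Icc X H, z ^ (f Y - f A) = z ^ (f Y - f H) * z ^ (f H - f A) := by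
    intro A hA
    rw [← pow_add, Nat.sub_add_sub_cancel (hf hHY) (hf (mem_Icc.1 hA).2)]
  calc ∑ y ∈ Icc X Y with y ⊓ H = X, charPoly (mu ℤ) f y Y
      = ∑ y ∈ Icc X Y with y ⊓ H = X, ∑ A ∈ Icc y Y, mu ℤ y A • z ^ (f Y - f A) := by
        simp only [charPoly_eq_sum_Icc, z]
    _ = ∑ A ∈ Icc X Y, ∑ y ∈ Icc X A with y ⊓ H = X, mu ℤ y A • z ^ (f Y - f A) := by
        refine sum_comm' fun y A => ?_
        simp only [mem_filter, mem_Icc]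
        constructor
        · rintro ⟨⟨⟨hXy, -⟩, hyH⟩, hyA, hAY⟩
          exact ⟨⟨⟨hXy, hyA⟩, hyH⟩, hXy.trans hyA, hAY⟩
        · rintro ⟨⟨⟨hXy, hyA⟩, hyH⟩, -, hAY⟩
          exact ⟨⟨⟨hXy, hyA.trans hAY⟩, hyH⟩, hyA, hAY⟩
    _ = ∑ A ∈ Icc X Y with A ≤ H, mu ℤ X A • z ^ (f Y - f A) := by
        rw [sum_filter]
        simp only [← sum_smul, sum_filter_inf_eq_mu, ite_smul, zero_smul]
    _ = ∑ A ∈ Icc X H, mu ℤ X A • z ^ (f Y - f A) := by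
        refine sum_congr ?_ fun _ _ => rfl
        ext A
        simp only [mem_filter, mem_Icc]
        exact ⟨fun h => ⟨h.1.1, h.2⟩, fun h => ⟨⟨h.1, h.2.trans hHY⟩, h.2⟩⟩
    _ = z ^ (f Y - f H) * charPoly (mu ℤ) f X H := by
        rw [charPoly_eq_sum_Icc, mul_sum]
        exact sum_congr rfl fun A hA => by rw [hpow A hA, mul_smul_comm]

end CharPoly

theorem inf_eq_bot_iff_of_isCoatom {L : Type*} [Lattice L] [BoundedOrder L]
    [IsLowerModularLattice L] {H : L} (hH : IsCoatom H) {y : L} :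
    y ⊓ H = ⊥ ↔ y = ⊥ ∨ IsAtom y ∧ ¬ y ≤ H := by
  constructor
  · intro h
    by_cases hy : y ≤ H
    · exact .inl (by rwa [inf_eq_left.2 hy] at h)
    · have hsup : H ⊔ y = ⊤ := hH.2 _ (left_lt_sup.2 hy)
      have hcov : H ⊓ y ⋖ y :=
        IsLowerModularLattice.inf_covBy_of_covBy_sup (hsup ▸ hH.covBy_top)
      rw [inf_comm, h] at hcov
      exact .inr ⟨bot_covBy_iff.1 hcov, hy⟩
  · rintro (rfl | ⟨hatom, hy⟩)
    · exact bot_inf_eq H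
    · exact (hatom.not_le_iff_disjoint.1 hy).eq_bot

theorem charPoly_coatom_restriction_general
    {L : Type*} [Lattice L] [BoundedOrder L] [Finite L] [IsLowerModularLattice L]
    {f : L → ℕ} (hf : Monotone f) {μ : L → L → ℤ} (hμ_refl : ∀ x : L, μ x x = 1)
    (hμ_rec : ∀ x y : L, x < y → μ x y = -∑ᶠ z ∈ Set.Ico x y, μ x z)
    {H : L} (hH : IsCoatom H) :
    (charPoly μ f ⊥ ⊤ =
      (Polynomial.X : Polynomial ℤ) ^ (f ⊤ - f H) * charPoly μ f ⊥ H
        - ∑ᶠ y ∈ {y : L | IsAtom y ∧ ¬ y ≤ H}, charPoly μ f y ⊤)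
    ∧ ((∃ A : L, H < A ∧ f A = f H) →
      charPoly μ f ⊥ ⊤ =
        charPoly μ f ⊥ H
          - ∑ᶠ y ∈ {y : L | IsAtom y ∧ ¬ y ≤ H}, charPoly μ f y ⊤) := by
  classical
  have := Fintype.ofFinite L
  let := Fintype.toLocallyFiniteOrder (α := L)
  simp only [charPoly_eq_charPoly_mu hμ_refl hμ_rec]
  have hset : ((Icc ⊥ ⊤ : Finset L).filter (· ⊓ H = ⊥) : Set L) =
      insert ⊥ {y | IsAtom y ∧ ¬ y ≤ H} := by
    ext y
    simp [inf_eq_bot_iff_of_isCoatom hH]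
  have hsum := sum_filter_inf_eq_charPoly_mu hf ⊥ (le_top : H ≤ ⊤)
  rw [← finsum_mem_coe_finset, hset,
    finsum_mem_insert _ (fun hbot => hbot.2 bot_le) (Set.toFinite _)] at hsum
  refine ⟨eq_sub_of_add_eq hsum, ?_⟩
  rintro ⟨A, hHA, hfA⟩
  rw [hH.2 A hHA] at hfA
  rw [hfA, Nat.sub_self, pow_zero, one_mul] at hsum
  exact eq_sub_of_add_eq hsum

/-- for a weighted lattice `W = (L, f)` with `L` a finite modular
(relatively) complemented lattice and `H` a coatom of `L`:
(1) `P(W; z) = z^(f ⊤ - f H) · P(W|_H; z) - ∑_{y atom, y ≰ H} P(W/y; z)`; and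
(2) if `H` is not a flat of `W`, then
`P(W; z) = P(W|_H; z) - ∑_{y atom, y ≰ H} P(W/y; z)`. -/
theorem charPoly_coatom_restriction
    {L : Type*} [Lattice L] [BoundedOrder L] [Finite L] [IsModularLattice L]
    (hcompl : ∀ a b c : L, a ≤ c → c ≤ b → ∃ d : L, c ⊓ d = a ∧ c ⊔ d = b)
    (f : L → ℕ) (hf0 : f ⊥ = 0) (hfmono : Monotone f)
    (μ : L → L → ℤ)
    (hμ_refl : ∀ x : L, μ x x = 1)
    (hμ_rec : ∀ x y : L, x < y → μ x y = -∑ᶠ z ∈ Set.Ico x y, μ x z)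
    (H : L) (hH : IsCoatom H) :
    (charPoly μ f ⊥ ⊤ =
      (Polynomial.X : Polynomial ℤ) ^ (f ⊤ - f H) * charPoly μ f ⊥ H
        - ∑ᶠ y ∈ {y : L | IsAtom y ∧ ¬ y ≤ H}, charPoly μ f y ⊤)
    ∧ ((∃ A : L, H < A ∧ f A = f H) →
      charPoly μ f ⊥ ⊤ =
        charPoly μ f ⊥ H
          - ∑ᶠ y ∈ {y : L | IsAtom y ∧ ¬ y ≤ H}, charPoly μ f y ⊤) :=
  charPoly_coatom_restriction_general hfmono hμ_refl hμ_rec hH
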